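/- If (1, c-1, c) is an abc triple (with c > 1 an integer), then (1, c^k - 1, c^k) is an abc triple for each positive integer k. -/

import Mathlib

open scoped Classical

/-- The radical of a natural number: the product of its distinct prime factors. -/
def rad (n : ℕ) : ℕ := ∏ p ∈ n.primeFactors, p

/-- The cosocle of a natural number: `n / rad n`. -/
def cosocle (n : ℕ) : ℕ := n / rad n

/-- `(a, b, c)` is an abc triple: `a, b, c` are relatively prime positive integers with
`a + b = c` and `rad (a*b*c) < c`. -/
def IsABCTriple (a b c : ℕ) : Prop :=
  0 < a ∧ 0 < b ∧ 0 < c ∧ a + b = c ∧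
    Nat.Coprime a b ∧ Nat.Coprime a c ∧ Nat.Coprime b c ∧ rad (a * b * c) < c

/-!
Put `d = c - a` and `c ^ k - a ^ k = d * s`. Every prime dividing `a ^ k * (d * s) * c ^ k`
divides `a * d * c * s`, so passing from `(a, d, c)` to `(a ^ k, d * s, c ^ k)` multiplies the
radical of the product by at most `rad s ≤ s`, while the middle entry is multiplied by exactly `s`.
Hence the inequality `rad (a * d * c) ≤ d` is inherited. For `a = 1` it says precisely that
`rad (a * d * c) < c`.
-/

open UniqueFactorizationMonoid (radical radical_dvd_radical radical_mul_dvd radical_pow_dvd)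

theorem rad_eq_radical (n : ℕ) : rad n = radical n :=
  Nat.radical_eq_prod_primeFactors.symm

theorem rad_le_self {n : ℕ} (hn : n ≠ 0) : rad n ≤ n := by
  rw [rad_eq_radical]
  exact Nat.radical_le_self_iff.2 hn

theorem rad_mul_le (m n : ℕ) : rad (m * n) ≤ rad m * rad n := by
  simp only [rad_eq_radical]
  exact Nat.le_of_dvd (Nat.mul_pos (Nat.radical_pos m) (Nat.radical_pos n)) radical_mul_dvd

theorem rad_le_rad_of_dvd_pow {m n k : ℕ} (hn : n ≠ 0) (h : m ∣ n ^ k) : rad m ≤ rad n := by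
  simp only [rad_eq_radical]
  exact Nat.le_of_dvd (Nat.radical_pos n)
    ((radical_dvd_radical h (pow_ne_zero k hn)).trans radical_pow_dvd)

theorem rad_pow_mul_mul_pow_le {a d c s k : ℕ} (ha : a ≠ 0) (hd : d ≠ 0) (hc : c ≠ 0)
    (hs : s ≠ 0) (hk : k ≠ 0) :
    rad (a ^ k * (d * s) * c ^ k) ≤ rad (a * d * c) * s := by
  have hdvd : a ^ k * (d * s) * c ^ k ∣ (a * d * c * s) ^ k :=
    calc a ^ k * (d * s) * c ^ k
      _ ∣ a ^ k * (d * s) ^ k * c ^ k := by gcongr; exact dvd_pow_self _ hk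
      _ = (a * d * c * s) ^ k := by ring
  calc rad (a ^ k * (d * s) * c ^ k)
    _ ≤ rad (a * d * c * s) := rad_le_rad_of_dvd_pow (by positivity) hdvd
    _ ≤ rad (a * d * c) * rad s := rad_mul_le _ _
    _ ≤ rad (a * d * c) * s := by gcongr; exact rad_le_self hs

theorem rad_pow_mul_pow_sub_pow_mul_pow_le {a c k : ℕ} (ha : 0 < a) (hac : a < c) (hk : k ≠ 0)
    (hrad : rad (a * (c - a) * c) ≤ c - a) :
    rad (a ^ k * (c ^ k - a ^ k) * c ^ k) ≤ c ^ k - a ^ k := by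
  have hpow : a ^ k < c ^ k := Nat.pow_lt_pow_left hac hk
  obtain ⟨s, hs⟩ : c - a ∣ c ^ k - a ^ k := Nat.sub_dvd_pow_sub_pow c a k
  have hs_ne : s ≠ 0 := right_ne_zero_of_mul (hs ▸ (Nat.sub_pos_of_lt hpow).ne')
  rw [hs]
  calc rad (a ^ k * ((c - a) * s) * c ^ k)
    _ ≤ rad (a * (c - a) * c) * s :=
      rad_pow_mul_mul_pow_le ha.ne' (Nat.sub_pos_of_lt hac).ne' (ha.trans hac).ne' hs_ne hk
    _ ≤ (c - a) * s := by gcongr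

theorem isABCTriple_sub {a c : ℕ} (ha : 0 < a) (hac : a < c) (hcop : Nat.Coprime a c)
    (hrad : rad (a * (c - a) * c) < c) : IsABCTriple a (c - a) c :=
  ⟨ha, Nat.sub_pos_of_lt hac, ha.trans hac, Nat.add_sub_cancel' hac.le,
    (Nat.coprime_sub_self_right hac.le).2 hcop, hcop,
    (Nat.coprime_self_sub_left hac.le).2 hcop, hrad⟩

theorem stmt_4_general {a c k : ℕ} (ha : 0 < a) (hac : a < c) (hcop : Nat.Coprime a c)
    (hrad : rad (a * (c - a) * c) ≤ c - a) (hk : k ≠ 0) :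
    IsABCTriple (a ^ k) (c ^ k - a ^ k) (c ^ k) := by
  have hpow_pos : 0 < a ^ k := Nat.pow_pos ha
  have hpow_lt : a ^ k < c ^ k := Nat.pow_lt_pow_left hac hk
  refine isABCTriple_sub hpow_pos hpow_lt (hcop.pow k k) ?_
  calc rad (a ^ k * (c ^ k - a ^ k) * c ^ k)
    _ ≤ c ^ k - a ^ k := rad_pow_mul_pow_sub_pow_mul_pow_le ha hac hk hrad
    _ < c ^ k := Nat.sub_lt (hpow_pos.trans hpow_lt) hpow_pos

theorem stmt_4 (c : ℕ) (hc : 1 < c) (h : IsABCTriple 1 (c - 1) c) :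
    ∀ k : ℕ, 0 < k → IsABCTriple 1 (c ^ k - 1) (c ^ k) := by
  intro k hk
  obtain ⟨-, -, -, -, -, -, -, hrad⟩ := h
  simpa only [one_pow] using
    stmt_4_general one_pos hc (Nat.coprime_one_left c) (Nat.le_sub_one_of_lt hrad) hk.ne'
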